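/- Let n be a natural number. For each s with 0 ≤ 3s ≤ n+1 set μ_s = C(n,s) − C(n,s−1); there are exactly μ_s standard s-element subsets of {1,…,n}. Then there exists a family of integer matrices E_s, for 0 ≤ 3s ≤ n+1, where E_s has rows indexed by {0,1,…,μ_s−1} and columns indexed by the standard s-element subsets, such that: (a) each E_s is unimodular, i.e. the induced ℤ-linear map from ℤ^{μ_s} to integer vectors indexed by standard s-subsets is bijective; and (b) for all i ≤ j with 3j ≤ n+1, E_i · W_{i,j} = D_{i,j} · E_j, where D_{i,j} is the μ_i × μ_j matrix whose (t,t) entry equals C(j−s, i−s) for the unique s with μ_{s−1} ≤ t < μ_s (for 0 ≤ t < μ_i), and whose other entries are zero. -/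

import Mathlib

open scoped Classical

/-- Integer binomial coefficient with the convention `C x y = 0` unless `0 ≤ y ≤ x`. -/
noncomputable def C (x y : ℤ) : ℤ :=
  if 0 ≤ y ∧ y ≤ x then (x.toNat).choose y.toNat else 0

/-- `μ_s(n) = C(n,s) − C(n,s−1)` (so `μ_{−1} = 0`). -/
noncomputable def mu (n : ℕ) (s : ℤ) : ℤ := C n s - C n (s - 1)

/-- A finset `β = {b₁ < b₂ < … < b_m}` of naturals is *standard* if `bᵢ ≥ 2i` for all `i`. -/
def IsStandard (β : Finset ℕ) : Prop :=
  ∀ i < β.card, 2 * (i + 1) ≤ (β.sort (· ≤ ·)).getD i 0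

/-- The standard `k`-element subsets of `{1,…,n}`. -/
noncomputable def stdSets (n k : ℕ) : Finset (Finset ℕ) :=
  (Finset.Icc 1 n).powerset.filter fun β => IsStandard β ∧ β.card = k

/-- The standard inclusion matrix `W_{i,j}`. -/
noncomputable def W (n i j : ℕ) : Matrix ↥(stdSets n i) ↥(stdSets n j) ℤ :=
  Matrix.of fun α β => if (α : Finset ℕ) ⊆ (β : Finset ℕ) then 1 else 0

/-- The `μ_i × μ_j` diagonal matrix `D_{i,j}` whose `(t,t)` entry is `C(j−s,i−s)`
for the unique `s` with `μ_{s−1} ≤ t < μ_s`. -/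
noncomputable def Dmat (n i j : ℕ) :
    Matrix (Fin (mu n i).toNat) (Fin (mu n j).toNat) ℤ :=
  Matrix.of fun t u =>
    if (t : ℕ) = (u : ℕ) then
      ∑ s ∈ Finset.range (i + 1),
        if mu n ((s : ℤ) - 1) ≤ ((t : ℕ) : ℤ) ∧ ((t : ℕ) : ℤ) < mu n s then
          ((j - s).choose (i - s) : ℤ)
        else 0
    else 0

/-!
The rows of `E_s` are the vectors `(1 if γ ⊆ β else 0)_β`, one for each set `γ` of size at most `s`
that is standard both forwards and backwards (*bistandard*), listed by increasing size of `γ`.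

Since subsets of standard sets are standard, the number of standard `i`-sets between `γ` and a
standard `j`-set `β ⊇ γ` is `C(j - |γ|, i - |γ|)`, which is the diagonal relation.

For unimodularity, a set that is not standard has the zero vector, and a straightening argument,
dual to the fact that a null design vanishing on all reverse standard blocks is zero, expresses the
vectors of the remaining sets through those of bistandard sets. So the rows of `E_s` span, and they
form a basis as soon as their number is `μ_s`. Bistandard `d`-sets are lattice paths confined to a
strip; for `3 * d ≤ n + 1` only the first terms of the reflection formula survive, and there are
exactly `μ_d - μ_{d-1}` of them.
-/

section LatticePaths

open Finset

theorem C_natCast (n k : ℕ) : C n k = n.choose k := by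
  unfold C
  split_ifs with h
  · simp
  · rw [Nat.choose_eq_zero_of_lt (by omega), Nat.cast_zero]

theorem C_of_neg (x : ℤ) {s : ℤ} (hs : s < 0) : C x s = 0 :=
  if_neg fun h => by omega

theorem C_of_lt {x s : ℤ} (hs : x < s) : C x s = 0 :=
  if_neg fun h => by omega

theorem C_succ (n : ℕ) (s : ℤ) : C (n + 1 : ℕ) s = C n s + C n (s - 1) := by
  rcases lt_trichotomy s 0 with hs | rfl | hs
  · simp only [C_of_neg _ hs, C_of_neg _ (by omega : s - 1 < 0), add_zero]
  · rw [C_of_neg _ (by omega : (0 : ℤ) - 1 < 0), ← Nat.cast_zero, C_natCast, C_natCast]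
    simp
  · obtain ⟨k, rfl⟩ : ∃ k : ℕ, s = (k + 1 : ℕ) := ⟨(s - 1).toNat, by omega⟩
    rw [show ((k + 1 : ℕ) : ℤ) - 1 = (k : ℕ) by push_cast; ring, C_natCast, C_natCast, C_natCast,
      Nat.choose_succ_succ', Nat.cast_add, add_comm]

theorem C_symm (n : ℕ) (s : ℤ) : C n (n - s) = C n s := by
  by_cases h : 0 ≤ s ∧ s ≤ n
  · obtain ⟨k, rfl⟩ := Int.eq_ofNat_of_zero_le h.1
    have hk : k ≤ n := by omega
    rw [← Nat.cast_sub hk, C_natCast, C_natCast, Nat.choose_symm hk]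
  · rw [C, C, if_neg h, if_neg (by omega)]

theorem mu_succ (n : ℕ) (s : ℤ) : mu (n + 1) s = mu n s + mu n (s - 1) := by
  simp only [mu, C_succ]
  ring

theorem mu_reflect (n : ℕ) (s : ℤ) : mu n (n + 1 - s) = -mu n s := by
  rw [mu, mu, show (n : ℤ) + 1 - s = n - (s - 1) by ring, C_symm,
    show (n : ℤ) - (s - 1) - 1 = n - s by ring, C_symm]
  ring

theorem mu_of_neg (n : ℕ) {s : ℤ} (hs : s < 0) : mu n s = 0 := by
  rw [mu, C_of_neg _ hs, C_of_neg _ (by omega), sub_zero]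

theorem mu_of_lt {n : ℕ} {s : ℤ} (hs : n + 1 < s) : mu n s = 0 := by
  rw [mu, C_of_lt (by omega), C_of_lt (by omega), sub_zero]

theorem mu_zero (n : ℕ) : mu n 0 = 1 := by
  rw [mu, C_of_neg _ (by omega : (0 : ℤ) - 1 < 0), ← Nat.cast_zero, C_natCast]
  simp

theorem card_filter_le_orderEmbOfFin {ι : Type*} [LinearOrder ι] (s : Finset ι) {k : ℕ}
    (h : #s = k) (i : Fin k) : #{b ∈ s | b ≤ s.orderEmbOfFin h i} = i + 1 := by
  have hs := map_orderEmbOfFin_univ s h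
  generalize s.orderEmbOfFin h = e at hs ⊢
  subst hs
  have hIic : ({x | x ≤ i} : Finset (Fin k)) = Iic i := by ext; simp
  simp [filter_map, hIic]

theorem isStandard_iff {β : Finset ℕ} :
    IsStandard β ↔ ∀ t, 2 * #{b ∈ β | b ≤ t} ≤ t := by
  have sort_getD (i : Fin #β) : (β.sort (· ≤ ·)).getD i 0 = β.orderEmbOfFin rfl i :=
    List.getD_eq_getElem _ _ _
  constructor
  · intro h t
    rcases ({b ∈ β | b ≤ t}).eq_empty_or_nonempty with hempty | hne
    · simp [hempty]
    obtain ⟨hmem, hle⟩ := mem_filter.1 (max'_mem _ hne)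
    obtain ⟨i, hi⟩ : max' _ hne ∈ Set.range (β.orderEmbOfFin rfl) := by
      rwa [range_orderEmbOfFin]
    calc 2 * #{b ∈ β | b ≤ t}
        ≤ 2 * #{b ∈ β | b ≤ β.orderEmbOfFin rfl i} := by
          refine Nat.mul_le_mul_left 2 (card_le_card fun b hb => ?_)
          exact mem_filter.2 ⟨(mem_filter.1 hb).1, hi ▸ le_max' _ b hb⟩
      _ = 2 * (i + 1) := by rw [card_filter_le_orderEmbOfFin]
      _ ≤ β.orderEmbOfFin rfl i := sort_getD i ▸ h i i.2
      _ ≤ t := hi ▸ hle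
  · intro h i hi
    rw [sort_getD ⟨i, hi⟩, ← card_filter_le_orderEmbOfFin β rfl ⟨i, hi⟩]
    exact h _

theorem IsStandard.mono {α β : Finset ℕ} (hβ : IsStandard β) (h : α ⊆ β) : IsStandard α :=
  isStandard_iff.2 fun t =>
    (Nat.mul_le_mul_left 2 (card_le_card (filter_subset_filter _ h))).trans (isStandard_iff.1 hβ t)

theorem mem_stdSets {n k : ℕ} {β : Finset ℕ} :
    β ∈ stdSets n k ↔ β ⊆ Icc 1 n ∧ IsStandard β ∧ #β = k := by
  simp [stdSets]

theorem filter_subset_stdSets {n i j : ℕ} {δ : Finset ℕ} (hδ : δ ∈ stdSets n j) :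
    {α ∈ stdSets n i | α ⊆ δ} = δ.powersetCard i := by
  obtain ⟨hδn, hstd, -⟩ := mem_stdSets.1 hδ
  ext α
  simp only [mem_filter, mem_stdSets, mem_powersetCard]
  exact ⟨fun h => ⟨h.2, h.1.2.2⟩, fun h => ⟨⟨h.1.trans hδn, hstd.mono h.1, h.2⟩, h.1⟩⟩

/-- The lattice path of `β`, which after `t` steps is at height `t - 2 * #(β ∩ {1,…,t})`, stays
in the strip of heights `0,…,K` during its first `n` steps. -/
def InStrip (K n : ℕ) (β : Finset ℕ) : Prop :=
  ∀ t ≤ n, 2 * #{b ∈ β | b ≤ t} ≤ t ∧ t ≤ 2 * #{b ∈ β | b ≤ t} + K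

/-- The `d`-element subsets of `{1,…,n}` whose lattice path stays in the strip of heights
`0,…,K`. -/
noncomputable def strip (K n d : ℕ) : Finset (Finset ℕ) :=
  {β ∈ (Icc 1 n).powersetCard d | InStrip K n β}

theorem mem_strip {K n d : ℕ} {β : Finset ℕ} :
    β ∈ strip K n d ↔ (β ⊆ Icc 1 n ∧ #β = d) ∧ InStrip K n β := by
  rw [strip, mem_filter, mem_powersetCard]

theorem filter_le_eq_self {n : ℕ} {β : Finset ℕ} (h : β ⊆ Icc 1 n) : {b ∈ β | b ≤ n} = β :=
  filter_true_of_mem fun _ hb => (mem_Icc.1 (h hb)).2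

theorem InStrip.card_bounds {K n : ℕ} {β : Finset ℕ} (h : InStrip K n β) (hβ : β ⊆ Icc 1 n) :
    2 * #β ≤ n ∧ n ≤ 2 * #β + K := by
  simpa only [filter_le_eq_self hβ] using h n le_rfl

theorem inStrip_succ {K n : ℕ} {β : Finset ℕ} (hβ : β ⊆ Icc 1 (n + 1))
    (h₁ : 2 * #β ≤ n + 1) (h₂ : n + 1 ≤ 2 * #β + K) : InStrip K (n + 1) β ↔ InStrip K n β := by
  refine ⟨fun h t ht => h t (by omega), fun h t ht => ?_⟩
  rcases ht.lt_or_eq with hlt | rfl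
  · exact h t (by omega)
  · rw [filter_le_eq_self hβ]
    exact ⟨h₁, h₂⟩

theorem inStrip_insert_succ {K n : ℕ} {β : Finset ℕ} :
    InStrip K n (insert (n + 1) β) ↔ InStrip K n β := by
  refine forall₂_congr fun t ht => ?_
  rw [filter_insert, if_neg (by omega)]

theorem strip_eq_empty {K n d : ℕ} (h : n < 2 * d ∨ 2 * d + K < n) : strip K n d = ∅ := by
  refine eq_empty_of_forall_notMem fun β hβ => ?_
  obtain ⟨⟨hsub, rfl⟩, hstrip⟩ := mem_strip.1 hβ
  have := hstrip.card_bounds hsub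
  omega

theorem strip_zero {K n : ℕ} (h : n ≤ K) : strip K n 0 = {∅} := by
  ext β
  simp only [mem_strip, card_eq_zero, mem_singleton]
  refine ⟨fun hβ => hβ.1.2, ?_⟩
  rintro rfl
  refine ⟨⟨empty_subset _, rfl⟩, fun t ht => ?_⟩
  simp only [filter_empty, card_empty]
  omega

theorem sum_powersetCard_succ_insert {ι A : Type*} [DecidableEq ι] [AddCommMonoid A]
    {s : Finset ι} {a : ι} (ha : a ∉ s) (d : ℕ) (f : Finset ι → A) :
    ∑ γ ∈ (insert a s).powersetCard (d + 1), f γ =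
      ∑ γ ∈ s.powersetCard (d + 1), f γ + ∑ γ ∈ s.powersetCard d, f (insert a γ) := by
  have notMem {k : ℕ} {γ : Finset ι} (hγ : γ ∈ s.powersetCard k) : a ∉ γ :=
    fun h => ha ((mem_powersetCard.1 hγ).1 h)
  rw [powersetCard_succ_insert ha, sum_union, sum_image]
  · intro γ hγ γ' hγ' h
    rw [← erase_insert (notMem hγ), ← erase_insert (notMem hγ'), h]
  · refine disjoint_left.2 fun γ hγ hγ' => notMem hγ ?_
    obtain ⟨γ', -, rfl⟩ := mem_image.1 hγ'
    exact mem_insert_self a γ'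

theorem card_strip_succ {K n d : ℕ} (h₁ : 2 * (d + 1) ≤ n + 1) (h₂ : n + 1 ≤ 2 * (d + 1) + K) :
    #(strip K (n + 1) (d + 1)) = #(strip K n (d + 1)) + #(strip K n d) := by
  have hIcc : insert (n + 1) (Icc 1 n) = Icc 1 (n + 1) :=
    insert_Icc_right_eq_Icc_add_one (by omega)
  have hn : n + 1 ∉ Icc 1 n := by simp
  have inStrip_iff {γ : Finset ℕ} (hγ : γ ⊆ Icc 1 (n + 1)) (hcard : #γ = d + 1) :
      InStrip K (n + 1) γ ↔ InStrip K n γ :=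
    inStrip_succ hγ (hcard ▸ h₁) (hcard ▸ h₂)
  simp only [strip, card_filter]
  rw [← hIcc, sum_powersetCard_succ_insert hn]
  congr 1 <;> refine sum_congr rfl fun γ hγ => ?_ <;> obtain ⟨hsub, hcard⟩ := mem_powersetCard.1 hγ
  · simp only [inStrip_iff (hsub.trans (hIcc ▸ subset_insert _ _)) hcard]
  · have hins : #(insert (n + 1) γ) = d + 1 := by
      rw [card_insert_of_notMem fun h => hn (hsub h), hcard]
    simp only [inStrip_iff (hIcc ▸ insert_subset_insert _ hsub) hins, inStrip_insert_succ]

/-- These are the first two terms of the alternating sum given by reflection in the lines of height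
`-1` and `K + 1`; the others vanish for `d ≤ K + 1`. -/
theorem card_strip (K n d : ℕ) (hK : d ≤ K + 1) (h₁ : 2 * d ≤ n + 1) (h₂ : n ≤ 2 * d + K + 1) :
    (#(strip K n d) : ℤ) = mu n d + mu n (d + K + 2) := by
  induction n generalizing d with
  | zero =>
    obtain rfl : d = 0 := by omega
    rw [strip_zero K.zero_le, Nat.cast_zero, mu_zero, mu_of_lt (by push_cast; omega)]
    simp
  | succ n ih =>
    by_cases hlow : n + 1 < 2 * d
    · have hmid : mu (n + 1) d = 0 := by
        have := mu_reflect (n + 1) d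
        rw [show ((n + 1 : ℕ) : ℤ) + 1 - d = d by omega] at this
        omega
      rw [strip_eq_empty (.inl hlow), hmid, mu_of_lt (by push_cast; omega)]
      simp
    by_cases hhigh : 2 * d + K < n + 1
    · rw [strip_eq_empty (.inr hhigh),
        show (d : ℤ) + K + 2 = (n + 1 : ℕ) + 1 - d by push_cast; omega, mu_reflect]
      simp
    cases d with
    | zero =>
      rw [strip_zero (by omega), Nat.cast_zero, mu_zero, mu_of_lt (by push_cast; omega)]
      simp
    | succ d =>
      rw [card_strip_succ (by omega) (by omega), Nat.cast_add,
        ih (d + 1) (by omega) (by omega) (by omega), ih d (by omega) (by omega) (by omega),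
        mu_succ, mu_succ, show ((d + 1 : ℕ) : ℤ) - 1 = d by push_cast; ring,
        show ((d + 1 : ℕ) : ℤ) + K + 2 - 1 = d + K + 2 by push_cast; ring]
      ring

theorem stdSets_eq_strip (n d : ℕ) : stdSets n d = strip n n d := by
  ext β
  rw [mem_stdSets, mem_strip, isStandard_iff]
  constructor
  · exact fun ⟨hsub, hstd, hcard⟩ => ⟨⟨hsub, hcard⟩, fun t ht => ⟨hstd t, by omega⟩⟩
  · refine fun ⟨⟨hsub, hcard⟩, hstrip⟩ => ⟨hsub, fun t => ?_, hcard⟩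
    rcases le_total t n with ht | ht
    · exact (hstrip t ht).1
    · have := (hstrip.card_bounds hsub).1
      have := card_filter_le β (· ≤ t)
      omega

theorem card_stdSets {n s : ℕ} (hs : 2 * s ≤ n + 1) : (#(stdSets n s) : ℤ) = mu n s := by
  rw [stdSets_eq_strip, card_strip n n s (by omega) hs (by omega), mu_of_lt (s := s + n + 2)
    (by omega), add_zero]

end LatticePaths

section NullDesigns

open Finset

variable {ι A : Type*}

section AddCommMonoid

variable [DecidableEq ι] [AddCommMonoid A]

/-- A function on the `d`-element subsets (*blocks*) of `G` is a null design if it sums to zero over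
the blocks containing any fixed set of fewer than `d` points. -/
def IsNullDesign (G : Finset ι) (d : ℕ) (x : Finset ι → A) : Prop :=
  ∀ β ⊆ G, #β < d → ∑ γ ∈ G.powersetCard d with β ⊆ γ, x γ = 0

namespace IsNullDesign

variable {G : Finset ι} {d : ℕ} {x : Finset ι → A} {a : ι}

theorem link (hx : IsNullDesign (insert a G) (d + 1) x) (ha : a ∉ G) :
    IsNullDesign G d fun γ => x (insert a γ) := by
  intro β hβ hcard
  have haβ : a ∉ β := fun h => ha (hβ h)
  have hsum := hx (insert a β) (insert_subset_insert a hβ)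
    (by rw [card_insert_of_notMem haβ]; omega)
  rw [sum_filter, sum_powersetCard_succ_insert ha, sum_eq_zero, zero_add] at hsum
  · simpa only [insert_subset_insert_iff haβ, sum_filter] using hsum
  · refine fun γ hγ => if_neg fun h => ha ?_
    exact (mem_powersetCard.1 hγ).1 (h (mem_insert_self a β))

theorem delete (hx : IsNullDesign (insert a G) (d + 1) x) (ha : a ∉ G)
    (hlink : ∀ γ ∈ G.powersetCard d, x (insert a γ) = 0) : IsNullDesign G (d + 1) x := by
  intro β hβ hcard
  have hsum := hx β (hβ.trans (subset_insert a G)) hcard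
  rw [sum_filter, sum_powersetCard_succ_insert ha,
    sum_eq_zero (s := G.powersetCard d) fun γ hγ => by rw [hlink γ hγ, ite_self], add_zero] at hsum
  rw [sum_filter, hsum]

end IsNullDesign

end AddCommMonoid

section AddCommGroup

variable [AddCommGroup A]

/-- Inclusion–exclusion over `G \ α`, which has fewer than `d` elements. -/
theorem IsNullDesign.eq_zero_of_card_lt [DecidableEq ι] {G : Finset ι} {d : ℕ}
    {x : Finset ι → A} (hx : IsNullDesign G d x) (hG : #G < 2 * d) {α : Finset ι}
    (hα : α ∈ G.powersetCard d) : x α = 0 := by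
  obtain ⟨hαG, hαd⟩ := mem_powersetCard.1 hα
  have hcompl : #(G \ α) < d := by
    rw [card_sdiff_of_subset hαG]
    omega
  have sum_signs (γ : Finset ι) (hγ : γ ∈ G.powersetCard d) :
      ∑ β ∈ (G \ α).powerset with β ⊆ γ, (-1 : ℤ) ^ #β = if γ = α then 1 else 0 := by
    obtain ⟨hγG, hγd⟩ := mem_powersetCard.1 hγ
    have hfilter : {β ∈ (G \ α).powerset | β ⊆ γ} = ((G \ α) ∩ γ).powerset := by
      ext β
      simp only [mem_filter, mem_powerset, subset_inter_iff]
    have hiff : (G \ α) ∩ γ = ∅ ↔ γ = α := by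
      rw [inter_comm, ← inter_sdiff_assoc, inter_eq_left.2 hγG, sdiff_eq_empty_iff_subset]
      exact ⟨fun h => eq_of_subset_of_card_le h (hαd.trans hγd.symm).le, fun h => h.subset⟩
    rw [hfilter, sum_powerset_neg_one_pow_card]
    simp only [hiff]
  calc x α = ∑ γ ∈ G.powersetCard d, (if γ = α then (1 : ℤ) else 0) • x γ := by
        simp [ite_smul, hα]
    _ = ∑ γ ∈ G.powersetCard d, ∑ β ∈ (G \ α).powerset,
          if β ⊆ γ then (-1 : ℤ) ^ #β • x γ else 0 := by
        refine sum_congr rfl fun γ hγ => ?_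
        rw [← sum_signs γ hγ, sum_smul, sum_filter]
    _ = ∑ β ∈ (G \ α).powerset, (-1 : ℤ) ^ #β • ∑ γ ∈ G.powersetCard d with β ⊆ γ, x γ := by
        simp only [smul_sum, sum_filter, smul_ite, smul_zero]
        exact sum_comm
    _ = 0 := by
        refine sum_eq_zero fun β hβ => ?_
        have hβ := mem_powerset.1 hβ
        rw [hx β (hβ.trans sdiff_subset) ((card_le_card hβ).trans_lt hcompl), smul_zero]

variable [LinearOrder ι]

/-- The mirror image, inside the ground set `G`, of the ballot condition `isStandard_iff`: read from
the largest element of `G` downwards, at most half of the elements met so far lie in `γ`. -/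
def IsRevStandard (G γ : Finset ι) : Prop :=
  ∀ t, 2 * #{b ∈ γ | t ≤ b} ≤ #{b ∈ G | t ≤ b}

theorem isRevStandard_empty (G : Finset ι) : IsRevStandard G ∅ := fun t => by simp

theorem IsRevStandard.mono {G H γ : Finset ι} (hγ : IsRevStandard G γ) (h : G ⊆ H) :
    IsRevStandard H γ :=
  fun t => (hγ t).trans (card_le_card (filter_subset_filter _ h))

theorem IsRevStandard.insert_min {G γ : Finset ι} {a : ι} (hγ : IsRevStandard G γ)
    (ha : ∀ b ∈ G, a < b) (hcard : 2 * #(insert a γ) ≤ #(insert a G)) :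
    IsRevStandard (insert a G) (insert a γ) := by
  intro t
  rcases le_or_gt t a with hta | hat
  · have hall : {b ∈ insert a G | t ≤ b} = insert a G :=
      filter_true_of_mem (forall_mem_insert _ _ _ |>.2 ⟨hta, fun b hb => hta.trans (ha b hb).le⟩)
    have := card_filter_le (insert a γ) (t ≤ ·)
    rw [hall]
    omega
  · rw [filter_insert, filter_insert, if_neg hat.not_ge, if_neg hat.not_ge]
    exact hγ t

theorem IsNullDesign.eq_zero {G : Finset ι} {d : ℕ} {x : Finset ι → A} (hx : IsNullDesign G d x)
    (hrev : ∀ γ ∈ G.powersetCard d, IsRevStandard G γ → x γ = 0) :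
    ∀ α ∈ G.powersetCard d, x α = 0 := by
  induction G using Finset.induction_on_min generalizing d x with
  | empty =>
    intro α hα
    obtain rfl := subset_empty.1 (mem_powersetCard.1 hα).1
    exact hrev ∅ hα (isRevStandard_empty ∅)
  | insert a G ha ih =>
    have haG : a ∉ G := fun h => (ha a h).false
    rcases lt_or_ge #(insert a G) (2 * d) with hsmall | hlarge
    · exact fun α hα => hx.eq_zero_of_card_lt hsmall hα
    cases d with
    | zero =>
      intro α hα
      obtain rfl := card_eq_zero.1 (mem_powersetCard.1 hα).2
      exact hrev ∅ hα (isRevStandard_empty _)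
    | succ d =>
      have hwith : ∀ γ ∈ G.powersetCard d, x (insert a γ) = 0 := by
        refine ih (hx.link haG) fun γ hγ hγrev => ?_
        obtain ⟨hsub, hcard⟩ := mem_powersetCard.1 hγ
        have hins : #(insert a γ) = d + 1 := by
          rw [card_insert_of_notMem fun h => haG (hsub h), hcard]
        exact hrev _ (mem_powersetCard.2 ⟨insert_subset_insert a hsub, hins⟩)
          (hγrev.insert_min ha (by rwa [hins]))
      have hwithout : ∀ γ ∈ G.powersetCard (d + 1), x γ = 0 :=
        ih (hx.delete haG hwith) fun γ hγ hγrev =>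
          hrev γ (powersetCard_mono (subset_insert a G) hγ) (hγrev.mono (subset_insert a G))
      intro α hα
      rw [powersetCard_succ_insert haG, mem_union, mem_image] at hα
      rcases hα with hα | ⟨γ, hγ, rfl⟩
      exacts [hwithout α hα, hwith γ hγ]

end AddCommGroup

end NullDesigns

section Bistandard

open Finset

/-- The bistandard `d`-sets: the `d`-element subsets of `{1,…,n}` that are standard both forwards
and backwards. They index the rows of the matrices `E_s`. -/
noncomputable def biStd (n d : ℕ) : Finset (Finset ℕ) :=
  {γ ∈ stdSets n d | IsRevStandard (Icc 1 n) γ}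

theorem card_of_mem_biStd {n d : ℕ} {γ : Finset ℕ} (hγ : γ ∈ biStd n d) : #γ = d :=
  (mem_stdSets.1 (mem_filter.1 hγ).1).2.2

theorem isRevStandard_Icc_iff {n : ℕ} {γ : Finset ℕ} (hγ : γ ⊆ Icc 1 n) :
    IsRevStandard (Icc 1 n) γ ↔ ∀ t ≤ n, 2 * #{b ∈ γ | t < b} ≤ n - t := by
  have card_tail (t : ℕ) : #{b ∈ Icc 1 n | t < b} = n - t := by
    rw [← Nat.card_Ioc]
    congr 1
    ext b
    simp only [mem_filter, mem_Icc, mem_Ioc]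
    omega
  constructor
  · exact fun h t _ => card_tail t ▸ h (t + 1)
  · intro h t
    have tail_eq {s : Finset ℕ} (hs : s ⊆ Icc 1 n) : {b ∈ s | t ≤ b} = {b ∈ s | t - 1 < b} := by
      refine filter_congr fun b hb => ?_
      have := (mem_Icc.1 (hs hb)).1
      omega
    rw [tail_eq hγ, tail_eq Subset.rfl, card_tail]
    rcases le_total (t - 1) n with ht | ht
    · exact h _ ht
    · have hempty : {b ∈ γ | t - 1 < b} = ∅ :=
        filter_false_of_mem fun b hb => by have := (mem_Icc.1 (hγ hb)).2; omega
      simp [hempty]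

theorem biStd_eq_strip (n d : ℕ) : biStd n d = strip (n - 2 * d) n d := by
  ext β
  have hsplit (t : ℕ) : #{b ∈ β | b ≤ t} + #{b ∈ β | t < b} = #β := by
    simpa only [not_le] using card_filter_add_card_filter_not (s := β) (· ≤ t)
  rw [biStd, mem_filter, stdSets_eq_strip, mem_strip, mem_strip]
  constructor
  · rintro ⟨⟨⟨hsub, rfl⟩, hstrip⟩, hrev⟩
    rw [isRevStandard_Icc_iff hsub] at hrev
    have := hstrip.card_bounds hsub
    refine ⟨⟨hsub, rfl⟩, fun t ht => ⟨(hstrip t ht).1, ?_⟩⟩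
    have := hrev t ht
    have := hsplit t
    omega
  · rintro ⟨⟨hsub, rfl⟩, hstrip⟩
    have := hstrip.card_bounds hsub
    rw [isRevStandard_Icc_iff hsub]
    refine ⟨⟨⟨hsub, rfl⟩, fun t ht => ⟨(hstrip t ht).1, by omega⟩⟩, fun t ht => ?_⟩
    have := hstrip t ht
    have := hsplit t
    omega

theorem card_biStd {n d : ℕ} (hd : 3 * d ≤ n + 1) : (#(biStd n d) : ℤ) = mu n d - mu n (d - 1) := by
  rw [biStd_eq_strip, card_strip _ n d (by omega) (by omega) (by omega),
    show (d : ℤ) + (n - 2 * d : ℕ) + 2 = n + 1 - (d - 1) by omega, mu_reflect,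
    ← sub_eq_add_neg]

end Bistandard

section Enumeration

variable {α : Type*}

/-- The number of elements of `F 0, …, F (d - 1)` together, i.e. the position at which the block
`F d` starts when the finsets `F 0, F 1, …` are listed one after the other. -/
def blockStart (F : ℕ → Finset α) (d : ℕ) : ℕ := ∑ k ∈ Finset.range d, (F k).card

theorem blockStart_succ (F : ℕ → Finset α) (d : ℕ) :
    blockStart F (d + 1) = blockStart F d + (F d).card :=
  Finset.sum_range_succ _ _

theorem blockStart_mono (F : ℕ → Finset α) : Monotone (blockStart F) :=
  monotone_nat_of_le_succ fun d => by rw [blockStart_succ]; omega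

theorem lt_blockStart_succ_iff (F : ℕ → Finset α) (s t : ℕ) :
    t < blockStart F (s + 1) ↔ ∃ d ≤ s, t ∈ Set.Ico (blockStart F d) (blockStart F (d + 1)) := by
  constructor
  · intro ht
    induction s with
    | zero => exact ⟨0, le_rfl, Nat.zero_le t, ht⟩
    | succ s ih =>
      rcases lt_or_ge t (blockStart F (s + 1)) with hlt | hge
      · obtain ⟨d, hd, hmem⟩ := ih hlt
        exact ⟨d, hd.trans s.le_succ, hmem⟩
      · exact ⟨s + 1, le_rfl, hge, ht⟩
  · rintro ⟨d, hd, hmem⟩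
    exact hmem.2.trans_le (blockStart_mono F (by omega))

theorem exists_enumeration [Nonempty α] (F : ℕ → Finset α) :
    ∃ g : ℕ → α, ∀ d, g '' Set.Ico (blockStart F d) (blockStart F (d + 1)) = F d := by
  have exists_block_enumeration (d : ℕ) :
      ∃ h : ℕ → α, Set.BijOn h (Set.Ico (blockStart F d) (blockStart F (d + 1))) (F d) := by
    refine (Set.finite_Ico _ _).exists_bijOn_of_encard_eq ?_
    rw [← Finset.coe_Ico, Set.encard_coe_eq_coe_finsetCard, Set.encard_coe_eq_coe_finsetCard,
      Nat.card_Ico, blockStart_succ, Nat.add_sub_cancel_left]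
  choose h hbij using exists_block_enumeration
  have exists_common_value (t : ℕ) :
      ∃ a, ∀ d, t ∈ Set.Ico (blockStart F d) (blockStart F (d + 1)) → a = h d t := by
    by_cases ht : ∃ d, t ∈ Set.Ico (blockStart F d) (blockStart F (d + 1))
    · obtain ⟨d, hd⟩ := ht
      refine ⟨h d t, fun e he => ?_⟩
      rw [(blockStart_mono F).pairwise_disjoint_on_Ico_succ.eq
        (Set.not_disjoint_iff.2 ⟨t, hd, he⟩)]
    · exact ⟨Classical.arbitrary α, fun d hd => (ht ⟨d, hd⟩).elim⟩
  choose g hg using exists_common_value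
  exact ⟨g, fun d => (Set.image_congr fun t ht => hg t d ht).trans (hbij d).image_eq⟩

theorem image_Iio_blockStart_succ {F : ℕ → Finset α} {g : ℕ → α}
    (hg : ∀ d, g '' Set.Ico (blockStart F d) (blockStart F (d + 1)) = F d) (s : ℕ) :
    g '' Set.Iio (blockStart F (s + 1)) = {a | ∃ d ≤ s, a ∈ F d} := by
  have hIio : Set.Iio (blockStart F (s + 1)) =
      ⋃ d ≤ s, Set.Ico (blockStart F d) (blockStart F (d + 1)) := by
    ext t
    simp only [Set.mem_Iio, lt_blockStart_succ_iff, Set.mem_iUnion, exists_prop]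
  rw [hIio]
  simp only [Set.image_iUnion, hg]
  ext a
  simp

theorem blockStart_biStd {n d : ℕ} (hd : 3 * d ≤ n + 4) :
    (blockStart (biStd n) d : ℤ) = mu n (d - 1) := by
  induction d with
  | zero => exact (mu_of_neg n (by norm_num)).symm
  | succ d ih =>
    rw [blockStart_succ, Nat.cast_add, ih (by omega), card_biStd (by omega), Nat.cast_succ,
      add_sub_cancel_right]
    ring

theorem blockStart_succ_biStd {n s : ℕ} (hs : 3 * s ≤ n + 1) :
    blockStart (biStd n) (s + 1) = (mu n s).toNat := by
  have := blockStart_biStd (n := n) (d := s + 1) (by omega)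
  rw [Nat.cast_succ, add_sub_cancel_right] at this
  omega

end Enumeration

section SupersetIndicator

open Finset Matrix Submodule

/-- For `γ` standard of size `i` this is the row of `W n i j` indexed by `γ`, but `γ` may be any
finite set. -/
noncomputable def supersetIndicator (n j : ℕ) (γ : Finset ℕ) : stdSets n j → ℤ :=
  fun β => if γ ⊆ β then 1 else 0

theorem supersetIndicator_eq_single {n j : ℕ} (δ : stdSets n j) :
    supersetIndicator n j δ = Pi.single δ 1 := by
  ext β
  rw [supersetIndicator, Pi.single_apply]
  refine if_congr ⟨fun h => ?_, fun h => h ▸ Subset.rfl⟩ rfl rfl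
  refine (Subtype.ext (eq_of_subset_of_card_le h ?_)).symm
  rw [(mem_stdSets.1 δ.2).2.2, (mem_stdSets.1 β.2).2.2]

theorem supersetIndicator_eq_zero {n j : ℕ} {γ : Finset ℕ} (hγ : ¬ IsStandard γ) :
    supersetIndicator n j γ = 0 :=
  funext fun β => if_neg fun h => hγ ((mem_stdSets.1 β.2).2.1.mono h)

theorem sum_subset_mul_subset {ι : Type*} [DecidableEq ι] {𝒜 : Finset (Finset ι)}
    {β δ : Finset ι} {d : ℕ} (h𝒜 : {γ ∈ 𝒜 | γ ⊆ δ} = δ.powersetCard d) (hβ : #β ≤ d) :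
    ∑ γ ∈ 𝒜, (if β ⊆ γ then 1 else 0) * (if γ ⊆ δ then 1 else 0) =
      ((#δ - #β).choose (d - #β) : ℤ) * if β ⊆ δ then 1 else 0 := by
  have hsum : ∑ γ ∈ 𝒜, (if β ⊆ γ then 1 else 0) * (if γ ⊆ δ then 1 else 0) =
      (#{γ ∈ δ.powersetCard d | β ⊆ γ} : ℤ) := by
    simp only [mul_ite, mul_one, mul_zero]
    rw [← sum_filter, h𝒜, natCast_card_filter]
  rw [hsum]
  split_ifs with hβδ
  · rw [card_filter_powersetCard_subset _ _ _ hβδ hβ, mul_one]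
  · rw [filter_false_of_mem fun γ hγ h => hβδ (h.trans (mem_powersetCard.1 hγ).1), card_empty,
      Nat.cast_zero, mul_zero]

theorem supersetIndicator_vecMul_W {n i : ℕ} (j : ℕ) {γ : Finset ℕ} (hγ : #γ ≤ i) :
    supersetIndicator n i γ ᵥ* W n i j =
      ((j - #γ).choose (i - #γ) : ℤ) • supersetIndicator n j γ := by
  ext δ
  have := sum_subset_mul_subset (filter_subset_stdSets (i := i) δ.2) hγ
  rwa [(mem_stdSets.1 δ.2).2.2, ← sum_coe_sort] at this

theorem sum_supersetIndicator {n d : ℕ} (j : ℕ) {β : Finset ℕ} (hβ : #β ≤ d) :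
    ∑ γ ∈ (Icc 1 n).powersetCard d with β ⊆ γ, supersetIndicator n j γ =
      ((j - #β).choose (d - #β) : ℤ) • supersetIndicator n j β := by
  ext δ
  obtain ⟨hδn, -, hδj⟩ := mem_stdSets.1 δ.2
  have hfilter : {γ ∈ (Icc 1 n).powersetCard d | γ ⊆ (δ : Finset ℕ)} =
      (δ : Finset ℕ).powersetCard d := by
    ext γ
    simp only [mem_filter, mem_powersetCard]
    exact ⟨fun h => ⟨h.2, h.1.2⟩, fun h => ⟨⟨h.1.trans hδn, h.2⟩, h.1⟩⟩
  have := sum_subset_mul_subset hfilter hβ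
  rw [hδj] at this
  simpa only [Finset.sum_apply, sum_filter, Pi.smul_apply, smul_eq_mul, supersetIndicator,
    ite_mul, one_mul, zero_mul] using this

theorem supersetIndicator_mem_span_biStd {n j d : ℕ} (hd : d ≤ j) {γ : Finset ℕ}
    (hγ : γ ∈ (Icc 1 n).powersetCard d) :
    supersetIndicator n j γ ∈ span ℤ (supersetIndicator n j '' {γ | ∃ e ≤ j, γ ∈ biStd n e}) := by
  set P := span ℤ (supersetIndicator n j '' {γ | ∃ e ≤ j, γ ∈ biStd n e})
  induction d using Nat.strong_induction_on generalizing γ with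
  | _ d ih =>
    have hnull : IsNullDesign (Icc 1 n) d fun γ => P.mkQ (supersetIndicator n j γ) := by
      intro β hβ hcard
      have hβP : supersetIndicator n j β ∈ P :=
        ih #β hcard (hcard.le.trans hd) (mem_powersetCard.2 ⟨hβ, rfl⟩)
      rw [← map_sum, sum_supersetIndicator j hcard.le, mkQ_apply, Quotient.mk_eq_zero]
      exact P.smul_mem _ hβP
    refine (Quotient.mk_eq_zero P).1 (hnull.eq_zero (fun γ hγ hrev => ?_) γ hγ)
    obtain ⟨hsub, hcard⟩ := mem_powersetCard.1 hγ
    by_cases hstd : IsStandard γ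
    · refine (Quotient.mk_eq_zero P).2 (subset_span ⟨γ, ⟨d, hd, ?_⟩, rfl⟩)
      exact mem_filter.2 ⟨mem_stdSets.2 ⟨hsub, hstd, hcard⟩, hrev⟩
    · rw [supersetIndicator_eq_zero hstd, map_zero]

theorem span_supersetIndicator_biStd (n j : ℕ) :
    span ℤ (supersetIndicator n j '' {γ | ∃ d ≤ j, γ ∈ biStd n d}) = ⊤ := by
  rw [eq_top_iff, ← (Pi.basisFun ℤ (stdSets n j)).span_eq, span_le]
  rintro _ ⟨δ, rfl⟩
  obtain ⟨hδn, -, hδj⟩ := mem_stdSets.1 δ.2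
  rw [Pi.basisFun_apply, ← supersetIndicator_eq_single]
  exact supersetIndicator_mem_span_biStd le_rfl (mem_powersetCard.2 ⟨hδn, hδj⟩)

theorem bijective_vecMul_of_span_row_eq_top {m n R : Type*} [Fintype m] [Fintype n] [CommRing R]
    (M : Matrix m n R) (hcard : Fintype.card m ≤ Fintype.card n)
    (hspan : span R (Set.range M.row) = ⊤) : Function.Bijective fun v => v ᵥ* M := by
  cases subsingleton_or_nontrivial R
  · exact ⟨Function.injective_of_subsingleton _, fun v => ⟨0, Subsingleton.elim _ _⟩⟩
  refine OrzechProperty.bijective_of_surjective_of_finrank_le M.vecMulLinear ?_ ?_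
  · rw [← LinearMap.range_eq_top, range_vecMulLinear, hspan]
  · rwa [Module.finrank_fintype_fun_eq_card, Module.finrank_fintype_fun_eq_card]

/-- The matrix `E_s` attached to an enumeration `g` of the bistandard sets by increasing size. -/
noncomputable def supersetMatrix (g : ℕ → Finset ℕ) (n s : ℕ) :
    Matrix (Fin (mu n s).toNat) (stdSets n s) ℤ :=
  Matrix.of fun t => supersetIndicator n s (g t)

theorem bijective_vecMul_supersetMatrix {g : ℕ → Finset ℕ} {n s : ℕ}
    (hg : ∀ d, g '' Set.Ico (blockStart (biStd n) d) (blockStart (biStd n) (d + 1)) = biStd n d)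
    (hs : 3 * s ≤ n + 1) : Function.Bijective fun v => v ᵥ* supersetMatrix g n s := by
  refine bijective_vecMul_of_span_row_eq_top _ ?_ ?_
  · rw [Fintype.card_fin, Fintype.card_coe, ← card_stdSets (by omega), Int.toNat_natCast]
  · have hrows : Set.range (supersetMatrix g n s).row =
        supersetIndicator n s '' {γ | ∃ d ≤ s, γ ∈ biStd n d} := by
      rw [← image_Iio_blockStart_succ hg, blockStart_succ_biStd hs, ← Fin.range_val,
        ← Set.range_comp, ← Set.range_comp]
      rfl
    rw [hrows, span_supersetIndicator_biStd]

theorem Dmat_apply {n i d : ℕ} (j : ℕ) (hi : 3 * i ≤ n + 1) (hd : d ≤ i)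
    (t : Fin (mu n i).toNat) (u : Fin (mu n j).toNat)
    (ht : (t : ℕ) ∈ Set.Ico (blockStart (biStd n) d) (blockStart (biStd n) (d + 1))) :
    Dmat n i j t u = if (t : ℕ) = u then ((j - d).choose (i - d) : ℤ) else 0 := by
  have mem_block_iff {s : ℕ} (hs : s ≤ i) :
      (mu n ((s : ℤ) - 1) ≤ ((t : ℕ) : ℤ) ∧ ((t : ℕ) : ℤ) < mu n s) ↔ s = d := by
    have hstart := blockStart_biStd (n := n) (d := s) (by omega)
    have hend := blockStart_succ_biStd (n := n) (s := s) (by omega)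
    trans (t : ℕ) ∈ Set.Ico (blockStart (biStd n) s) (blockStart (biStd n) (s + 1))
    · rw [Set.mem_Ico]
      omega
    refine ⟨fun h => ?_, fun h => h ▸ ht⟩
    exact (blockStart_mono (biStd n)).pairwise_disjoint_on_Ico_succ.eq
      (Set.not_disjoint_iff.2 ⟨t, h, ht⟩)
  rw [Dmat, of_apply]
  congr 1
  have hsum : ∀ s ∈ range (i + 1),
      (if mu n ((s : ℤ) - 1) ≤ ((t : ℕ) : ℤ) ∧ ((t : ℕ) : ℤ) < mu n s
        then ((j - s).choose (i - s) : ℤ) else 0) =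
      if s = d then ((j - s).choose (i - s) : ℤ) else 0 := fun s hs =>
    if_congr (mem_block_iff (Nat.le_of_lt_succ (mem_range.1 hs))) rfl rfl
  rw [sum_congr rfl hsum, sum_ite_eq', if_pos (mem_range_succ_iff.2 hd)]

theorem supersetMatrix_mul_W {g : ℕ → Finset ℕ} {n i j : ℕ}
    (hg : ∀ d, g '' Set.Ico (blockStart (biStd n) d) (blockStart (biStd n) (d + 1)) = biStd n d)
    (hij : i ≤ j) (hj : 3 * j ≤ n + 1) :
    supersetMatrix g n i * W n i j = Dmat n i j * supersetMatrix g n j := by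
  have hi : 3 * i ≤ n + 1 := by omega
  ext t δ
  obtain ⟨d, hd, htd⟩ := (lt_blockStart_succ_iff (biStd n) i t).1
    (t.2.trans_eq (blockStart_succ_biStd hi).symm)
  have htj : (t : ℕ) < (mu n j).toNat := by
    rw [← blockStart_succ_biStd hj]
    exact htd.2.trans_le (blockStart_mono _ (by omega))
  have hgt : #(g t) = d := card_of_mem_biStd (mem_coe.1 (hg d ▸ Set.mem_image_of_mem g htd))
  calc (supersetMatrix g n i * W n i j) t δ
      = (supersetIndicator n i (g t) ᵥ* W n i j) δ := rfl
    _ = (j - d).choose (i - d) * supersetMatrix g n j ⟨t, htj⟩ δ := by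
        rw [supersetIndicator_vecMul_W j (hgt.trans_le hd), hgt]
        rfl
    _ = (Dmat n i j * supersetMatrix g n j) t δ := by
        rw [mul_apply, sum_eq_single ⟨t, htj⟩]
        · rw [Dmat_apply j hi hd t _ htd, if_pos rfl]
        · intro u _ hu
          rw [Dmat_apply j hi hd t u htd, if_neg fun h => hu (Fin.ext h.symm), zero_mul]
        · exact fun h => (h (mem_univ _)).elim

end SupersetIndicator

/-- There are exactly `μ_s` standard `s`-subsets, and there is a family `E_s` of
unimodular matrices simultaneously diagonalizing all the `W_{i,j}`:
`E_i · W_{i,j} = D_{i,j} · E_j`. -/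
theorem statement8 (n : ℕ) :
    (∀ s : ℕ, 3 * s ≤ n + 1 → ((stdSets n s).card : ℤ) = mu n s) ∧
    ∃ E : (s : ℕ) → Matrix (Fin (mu n s).toNat) ↥(stdSets n s) ℤ,
      (∀ s : ℕ, 3 * s ≤ n + 1 →
        Function.Bijective fun v : Fin (mu n s).toNat → ℤ => Matrix.vecMul v (E s)) ∧
      (∀ i j : ℕ, i ≤ j → 3 * j ≤ n + 1 →
        E i * W n i j = Dmat n i j * E j) := by
  obtain ⟨g, hg⟩ := exists_enumeration (biStd n)
  exact ⟨fun s hs => card_stdSets (by omega), supersetMatrix g n,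
    fun s hs => bijective_vecMul_supersetMatrix hg hs,
    fun i j hij hj => supersetMatrix_mul_W hg hij hj⟩
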